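/- For a piecewise-linear obstacle skeleton forming a closed loop L in ℝ³, the total 'magnetic field' integral of a closed robot loop γ disjoint from L, computed as the sum over segments of the analytic Biot–Savart contributions, equals the linking number of γ and L; in particular it is 0 when γ does not enclose L and ±1 when γ encloses L once. -/

import Mathlib

open Set

noncomputable section

/-- Dot product on ℝ³. -/
def dot3 (u v : Fin 3 → ℝ) : ℝ := u 0 * v 0 + u 1 * v 1 + u 2 * v 2

/-- Euclidean norm on ℝ³. -/
def norm3 (v : Fin 3 → ℝ) : ℝ := Real.sqrt (dot3 v v)

/-- Cross product on ℝ³. -/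
def cross3 (u v : Fin 3 → ℝ) : Fin 3 → ℝ := crossProduct u v

/-- The analytic Biot–Savart contribution of the segment `[o, o']` (unit current) at `r`. -/
def Phi (o o' r : Fin 3 → ℝ) : Fin 3 → ℝ :=
  let p := o - r
  let p' := o' - r
  let d := (norm3 (o' - o))⁻¹ ^ 2 • cross3 (o' - o) (cross3 p p')
  (norm3 d)⁻¹ ^ 2 • ((norm3 p')⁻¹ • cross3 d p' - (norm3 p)⁻¹ • cross3 d p)

/-- Total magnetic field of the closed polygonal loop with vertices `P 0, …, P m = P 0`. -/
def Bfield (m : ℕ) (P : ℕ → Fin 3 → ℝ) (r : Fin 3 → ℝ) : Fin 3 → ℝ :=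
  (4 * Real.pi)⁻¹ • ∑ i ∈ Finset.range m, Phi (P i) (P (i + 1)) r

/-- Piecewise-linear parametrization (on `[0, m]`) of the closed polygonal loop with
vertices `P 0, …, P m = P 0`. -/
def polyLoop (P : ℕ → Fin 3 → ℝ) (t : ℝ) : Fin 3 → ℝ :=
  P (⌊t⌋.toNat) + (t - ⌊t⌋) • (P (⌊t⌋.toNat + 1) - P (⌊t⌋.toNat))

/-- The Gauss linking number (as a real double integral) of the closed curve `γ` (on `[0,1]`)
and the polygonal loop `polyLoop P` (on `[0,m]`). -/
def gaussLinkingIntegral (m : ℕ) (P : ℕ → Fin 3 → ℝ) (γ : ℝ → Fin 3 → ℝ) : ℝ :=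
  (4 * Real.pi)⁻¹ *
    ∫ s in (0 : ℝ)..1, ∫ t in (0 : ℝ)..(m : ℝ),
      dot3 (cross3 (deriv γ s) (deriv (polyLoop P) t)) (γ s - polyLoop P t)
        / norm3 (γ s - polyLoop P t) ^ 3

open scoped Topology

/-! Seen from `r`, the vertices of the polygon give directions on the unit sphere, and the Bloch
sphere turns each direction into a projection onto a line in `ℂ²`. The trace of the product of these
projections around the polygon is a complex number with half the solid angle of the polygon as its
phase, nonzero as long as `r` stays off the polygon. Along `γ`, the imaginary part of its
logarithmic derivative is a sum over the edges whose terms are half the Biot–Savart contributions,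
hence equals `2π B(r)·dr`. The circulation of `B` is therefore the winding number around `0` of a
closed curve in `ℂ`: an integer, and zero if `γ` contracts off the polygon, because then a logarithm
of the holonomy exists on the whole square of the homotopy. Integrating the Gauss integrand edge by
edge gives the same Biot–Savart field. -/

section RankOneIdempotents

variable {n R K 𝕜 : Type*} [Fintype n]

/-- A rank one idempotent matrix, encoded by its trace and by the fact that it compresses every
matrix to a scalar multiple of itself. Projections onto lines are of this form, and the encoding
spares us the choice of a spanning vector of the line. -/
structure IsRankOneIdempotent [CommRing R] (p : Matrix n n R) : Prop where
  trace_eq_one : p.trace = 1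
  mul_mul_self : ∀ X, p * X * p = (p * X).trace • p

/-- The ordered product `p 0 * p 1 * ⋯ * p k`. -/
def pathProd [CommRing R] (p : ℕ → Matrix n n R) : ℕ → Matrix n n R
  | 0 => p 0
  | k + 1 => pathProd p k * p (k + 1)

/-- The contribution of the step from `p k` to `p (k + 1)` to the logarithmic derivative of
`pathProd p`, when the matrices `p i` move with velocities `p' i`. -/
def stepLogDeriv [Field K] (p p' : ℕ → Matrix n n K) (k : ℕ) : K :=
  (p (k + 1) * p k * (p' k + p' (k + 1))).trace / (p (k + 1) * p k).trace

namespace IsRankOneIdempotent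

lemma mul_self [CommRing R] {p : Matrix n n R} (hp : IsRankOneIdempotent p) : p * p = p := by
  classical simpa [hp.trace_eq_one] using hp.mul_mul_self 1

lemma ne_zero [CommRing R] [Nontrivial R] {p : Matrix n n R} (hp : IsRankOneIdempotent p) :
    p ≠ 0 := by
  rintro rfl
  simpa using hp.trace_eq_one

lemma mul_mul_eq_smul_mul [Field K] {p q : Matrix n n K} (hp : IsRankOneIdempotent p)
    (hq : IsRankOneIdempotent q) (hqp : (q * p).trace ≠ 0) (X : Matrix n n K) :
    p * X * q = ((q * p * X).trace / (q * p).trace) • (p * q) := by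
  rw [div_eq_inv_mul, mul_smul, eq_inv_smul_iff₀ hqp]
  calc (q * p).trace • (p * X * q) = p * q * p * X * q := by
        rw [hp.mul_mul_self, Matrix.trace_mul_comm q p, Matrix.smul_mul, Matrix.smul_mul]
    _ = p * (q * (p * X) * q) := by simp only [mul_assoc]
    _ = (q * p * X).trace • (p * q) := by
        rw [hq.mul_mul_self, Matrix.mul_smul, mul_assoc q]

end IsRankOneIdempotent

section Algebra

variable [CommRing R] {p : ℕ → Matrix n n R} {m k : ℕ}

lemma pathProd_mul_last (hp : IsRankOneIdempotent (p k)) :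
    pathProd p k * p k = pathProd p k := by
  cases k with
  | zero => exact hp.mul_self
  | succ k => rw [pathProd, mul_assoc, hp.mul_self]

lemma first_mul_pathProd (hp : IsRankOneIdempotent (p 0)) (k : ℕ) :
    p 0 * pathProd p k = pathProd p k := by
  induction k with
  | zero => exact hp.mul_self
  | succ k ih => rw [pathProd, ← mul_assoc, ih]

lemma pathProd_succ_mul (hp : IsRankOneIdempotent (p k)) :
    pathProd p (k + 1) * p k = (p (k + 1) * p k).trace • pathProd p k := by
  calc pathProd p (k + 1) * p k = pathProd p k * (p k * p (k + 1) * p k) := by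
        rw [pathProd, ← mul_assoc, ← mul_assoc, pathProd_mul_last hp]
    _ = _ := by
        rw [hp.mul_mul_self, Matrix.mul_smul, pathProd_mul_last hp, Matrix.trace_mul_comm]

lemma pathProd_ne_zero [IsDomain R] (hp : ∀ k ≤ m, IsRankOneIdempotent (p k))
    (hstep : ∀ k < m, (p (k + 1) * p k).trace ≠ 0) : pathProd p m ≠ 0 := by
  induction m with
  | zero => exact (hp 0 le_rfl).ne_zero
  | succ m ih =>
    intro hzero
    have h := pathProd_succ_mul (hp m m.le_succ)
    rw [hzero, zero_mul] at h
    exact smul_ne_zero (hstep m m.lt_succ_self)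
      (ih (fun k hk => hp k (hk.trans m.le_succ)) fun k hk => hstep k (hk.trans m.lt_succ_self))
      h.symm

lemma pathProd_eq_trace_smul_of_closed (hp : IsRankOneIdempotent (p 0)) (hclosed : p m = p 0) :
    pathProd p m = (pathProd p m).trace • p 0 := by
  have hlast : pathProd p m * p 0 = pathProd p m := by
    rw [← hclosed]
    exact pathProd_mul_last (hclosed ▸ hp)
  have h := hp.mul_mul_self (pathProd p m)
  rwa [first_mul_pathProd hp, hlast] at h

lemma trace_pathProd_ne_zero [IsDomain R] (hp : ∀ k ≤ m, IsRankOneIdempotent (p k))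
    (hclosed : p m = p 0) (hstep : ∀ k < m, (p (k + 1) * p k).trace ≠ 0) :
    (pathProd p m).trace ≠ 0 := by
  intro h
  refine pathProd_ne_zero hp hstep ?_
  rw [pathProd_eq_trace_smul_of_closed (hp 0 m.zero_le) hclosed, h, zero_smul]

lemma pathProd_mul_mul_next [Field K] {p : ℕ → Matrix n n K} (hp : IsRankOneIdempotent (p k))
    (hq : IsRankOneIdempotent (p (k + 1))) (hstep : (p (k + 1) * p k).trace ≠ 0)
    (X : Matrix n n K) :
    pathProd p k * X * p (k + 1)
      = ((p (k + 1) * p k * X).trace / (p (k + 1) * p k).trace) • pathProd p (k + 1) := by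
  calc pathProd p k * X * p (k + 1) = pathProd p k * (p k * X * p (k + 1)) := by
        conv_lhs => rw [← pathProd_mul_last hp]
        simp only [mul_assoc]
    _ = _ := by
        rw [hp.mul_mul_eq_smul_mul hq hstep, Matrix.mul_smul, ← mul_assoc, pathProd_mul_last hp,
          pathProd]

end Algebra

section Calculus

lemma hasDerivAt_eq_of_idempotent [NontriviallyNormedField 𝕜] {A : Type*} [NormedRing A]
    [NormedAlgebra 𝕜 A] {p : 𝕜 → A} {p' : A} {s : 𝕜} (hp : HasDerivAt p p' s)
    (hidem : ∀ᶠ u in 𝓝 s, p u * p u = p u) : p' = p' * p s + p s * p' :=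
  hp.unique ((hp.mul hp).congr_of_eventuallyEq (hidem.mono fun _ hu => hu.symm))

open scoped Matrix.Norms.Operator

variable [NontriviallyNormedField 𝕜] [NormedField K] [NormedAlgebra 𝕜 K]
  {p : 𝕜 → ℕ → Matrix n n K} {p' : ℕ → Matrix n n K} {s : 𝕜} {m : ℕ}

lemma IsRankOneIdempotent.hasDerivAt_eq {p : 𝕜 → Matrix n n K} {p' : Matrix n n K}
    (hp : ∀ᶠ u in 𝓝 s, IsRankOneIdempotent (p u)) (hp' : HasDerivAt p p' s) :
    p' = p' * p s + p s * p' := by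
  classical exact hasDerivAt_eq_of_idempotent hp' (hp.mono fun _ hu => hu.mul_self)

lemma IsRankOneIdempotent.trace_mul_hasDerivAt_eq_zero {p : 𝕜 → Matrix n n K} {p' : Matrix n n K}
    (hp : ∀ᶠ u in 𝓝 s, IsRankOneIdempotent (p u)) (hp' : HasDerivAt p p' s) :
    (p s * p').trace = 0 := by
  have hidem := hp.self_of_nhds.mul_self
  have hleibniz : p s * p' = p s * p' * p s + p s * p' := by
    conv_lhs => rw [IsRankOneIdempotent.hasDerivAt_eq hp hp']
    rw [mul_add, ← mul_assoc, ← mul_assoc, hidem]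
  calc (p s * p').trace = (p s * p' * p s).trace := by
        rw [Matrix.trace_mul_comm (p s * p'), ← mul_assoc, hidem]
    _ = 0 := by rw [right_eq_add.1 hleibniz, Matrix.trace_zero]

lemma hasDerivAt_trace {f : 𝕜 → Matrix n n K} {f' : Matrix n n K} (hf : HasDerivAt f f' s) :
    HasDerivAt (fun u => (f u).trace) f'.trace s :=
  (⟨Matrix.traceLinearMap n 𝕜 K, continuous_id.matrix_trace⟩ :
    Matrix n n K →L[𝕜] K).hasFDerivAt.comp_hasDerivAt s hf

/-- Each factor's velocity splits as `p' = p' p + p p'`; the two halves that meet between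
neighbouring factors are scalars, and only the outer halves at both ends survive. -/
lemma hasDerivAt_pathProd (hp : ∀ k ≤ m, ∀ᶠ u in 𝓝 s, IsRankOneIdempotent (p u k))
    (hp' : ∀ k ≤ m, HasDerivAt (fun u => p u k) (p' k) s)
    (hstep : ∀ k < m, (p s (k + 1) * p s k).trace ≠ 0) :
    HasDerivAt (fun u => pathProd (p u) m)
      ((∑ i ∈ Finset.range m, stepLogDeriv (p s) p' i) • pathProd (p s) m
        + p' 0 * pathProd (p s) m + pathProd (p s) m * p' m) s := by
  have hleibniz : ∀ k ≤ m, p' k = p' k * p s k + p s k * p' k := fun k hk =>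
    IsRankOneIdempotent.hasDerivAt_eq (p := fun u => p u k) (hp k hk) (hp' k hk)
  induction m with
  | zero => simpa [pathProd, ← hleibniz 0 le_rfl] using hp' 0 le_rfl
  | succ m ih =>
    have hprev := ih (fun k hk => hp k (hk.trans m.le_succ))
      (fun k hk => hp' k (hk.trans m.le_succ)) (fun k hk => hstep k (hk.trans m.lt_succ_self))
      fun k hk => hleibniz k (hk.trans m.le_succ)
    classical
    refine (hprev.mul (hp' (m + 1) le_rfl)).congr_deriv ?_
    have hturn := pathProd_mul_mul_next (hp m m.le_succ).self_of_nhds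
      (hp (m + 1) le_rfl).self_of_nhds (hstep m m.lt_succ_self) (p' m + p' (m + 1))
    conv_lhs => rw [hleibniz (m + 1) le_rfl]
    rw [Finset.sum_range_succ, add_smul, stepLogDeriv, ← hturn]
    simp only [pathProd, add_mul, mul_add, Matrix.smul_mul, mul_assoc]
    abel

lemma hasDerivAt_trace_pathProd (hp : ∀ k ≤ m, ∀ᶠ u in 𝓝 s, IsRankOneIdempotent (p u k))
    (hp' : ∀ k ≤ m, HasDerivAt (fun u => p u k) (p' k) s) (hclosed : ∀ u, p u m = p u 0)
    (hstep : ∀ k < m, (p s (k + 1) * p s k).trace ≠ 0) :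
    HasDerivAt (fun u => (pathProd (p u) m).trace)
      ((∑ i ∈ Finset.range m, stepLogDeriv (p s) p' i) * (pathProd (p s) m).trace) s := by
  have hp0 := hp 0 m.zero_le
  have hlast : p' m = p' 0 :=
    (hp' m le_rfl).unique ((hp' 0 m.zero_le).congr_of_eventuallyEq (.of_forall hclosed))
  have hend : (pathProd (p s) m * p' 0).trace = 0 := by
    rw [pathProd_eq_trace_smul_of_closed hp0.self_of_nhds (hclosed s), Matrix.smul_mul,
      Matrix.trace_smul, IsRankOneIdempotent.trace_mul_hasDerivAt_eq_zero (p := fun u => p u 0) hp0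
        (hp' 0 m.zero_le), smul_zero]
  refine (hasDerivAt_trace (hasDerivAt_pathProd hp hp' hstep)).congr_deriv ?_
  rw [hlast, Matrix.trace_add, Matrix.trace_add, Matrix.trace_smul, smul_eq_mul,
    Matrix.trace_mul_comm (p' 0), hend, add_zero, add_zero]

end Calculus

end RankOneIdempotents

section LogarithmicDerivative

variable {𝕜 𝕜' : Type*} [NontriviallyNormedField 𝕜] [NontriviallyNormedField 𝕜']
  [NormedAlgebra 𝕜 𝕜']

lemma hasDerivAt_of_comp_hasStrictDerivAt [CompleteSpace 𝕜'] {f : 𝕜' → 𝕜'} {f' z' : 𝕜'}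
    {φ Z : 𝕜 → 𝕜'} {s : 𝕜} (hφ : ContinuousAt φ s) (hf : HasStrictDerivAt f f' (φ s)) (hf' : f' ≠ 0)
    (hZ : HasDerivAt Z z' s) (hlift : f ∘ φ =ᶠ[𝓝 s] Z) : HasDerivAt φ (f'⁻¹ * z') s := by
  have hinv := (hf.to_localInverse hf').hasDerivAt
  rw [show f (φ s) = Z s from hlift.self_of_nhds] at hinv
  refine (hinv.comp s hZ).congr_of_eventuallyEq ?_
  filter_upwards [hlift, hφ.eventually (hf.eventually_left_inverse hf')] with u hu hleft
  rw [Function.comp_apply, ← hu, Function.comp_apply, hleft]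

lemma eq_of_forall_exp_eq {A : Type*} [TopologicalSpace A] {S : Set A} (hS : IsPreconnected S)
    {φ : A → ℂ} (hφ : ContinuousOn φ S) {w : ℂ} (hexp : ∀ x ∈ S, Complex.exp (φ x) = w) {x y : A}
    (hx : x ∈ S) (hy : y ∈ S) : φ x = φ y :=
  Complex.isCoveringMap_exp.constOn_of_comp hS hφ
    (fun x hx y hy => Subtype.ext ((hexp x hx).trans (hexp y hy).symm)) hx hy

lemma exists_continuousOn_log_of_convex {V : Type*} [AddCommGroup V] [Module ℝ V]
    [TopologicalSpace V] [IsTopologicalAddGroup V] [ContinuousSMul ℝ V]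
    [LocallyConvexSpace ℝ V] {S : Set V} (hS : Convex ℝ S) {g : V → ℂ} (hg : ContinuousOn g S)
    (hg0 : ∀ x ∈ S, g x ≠ 0) :
    ∃ φ : V → ℂ, ContinuousOn φ S ∧ ∀ x ∈ S, Complex.exp (φ x) = g x := by
  obtain rfl | ⟨x₀, hx₀⟩ := S.eq_empty_or_nonempty
  · simp
  have := hS.contractibleSpace ⟨x₀, hx₀⟩
  have := hS.locallyPathConnectedSpace V
  obtain ⟨F, ⟨-, hF⟩, -⟩ := Complex.isCoveringMapOn_exp.existsUnique_continuousMap_lifts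
    ⟨S.domRestrict g, hg.domRestrict⟩ (a₀ := ⟨x₀, hx₀⟩) (Complex.exp_log (hg0 x₀ hx₀))
    fun x => hg0 x x.2
  classical
  refine ⟨fun x => if hx : x ∈ S then F ⟨x, hx⟩ else 0, ?_, fun x hx => ?_⟩
  · rw [continuousOn_iff_continuous_domRestrict]
    convert! F.continuous with x
    simp
  · simpa [hx] using congrFun hF ⟨x, hx⟩

lemma continuousAt_logDeriv {Z : 𝕜 → 𝕜'} {s : 𝕜} (hZ : ContDiffAt 𝕜 1 Z s) (hZ0 : Z s ≠ 0) :
    ContinuousAt (logDeriv Z) s :=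
  ((hZ.continuousAt_fderiv one_ne_zero).clm_apply continuousAt_const).div hZ.continuousAt hZ0

variable {a b : ℝ} {Z : ℝ → ℂ}

lemma intervalIntegrable_logDeriv (hab : a ≤ b) (hZ : ∀ s ∈ Icc a b, ContDiffAt ℝ 1 Z s)
    (hZ0 : ∀ s ∈ Icc a b, Z s ≠ 0) :
    IntervalIntegrable (logDeriv Z) MeasureTheory.volume a b :=
  ContinuousOn.intervalIntegrable_of_Icc hab fun s hs =>
    (continuousAt_logDeriv (hZ s hs) (hZ0 s hs)).continuousWithinAt

lemma integral_logDeriv_eq_sub (hab : a ≤ b) (hZ : ∀ s ∈ Icc a b, ContDiffAt ℝ 1 Z s)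
    {φ : ℝ → ℂ} (hφ : ContinuousOn φ (Icc a b)) (hexp : ∀ s ∈ Icc a b, Complex.exp (φ s) = Z s) :
    ∫ s in a..b, logDeriv Z s = φ b - φ a := by
  have hZ0 : ∀ s ∈ Icc a b, Z s ≠ 0 := fun s hs => hexp s hs ▸ Complex.exp_ne_zero _
  refine intervalIntegral.integral_eq_sub_of_hasDerivAt_of_le hab hφ (fun s hs => ?_) ?_
  · have hderiv := hasDerivAt_of_comp_hasStrictDerivAt (hφ.continuousAt (Icc_mem_nhds hs.1 hs.2))
      (Complex.hasStrictDerivAt_exp _) (Complex.exp_ne_zero _)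
      ((hZ s (Ioo_subset_Icc_self hs)).differentiableAt one_ne_zero).hasDerivAt
      (by filter_upwards [Icc_mem_nhds hs.1 hs.2] with u hu using hexp u hu)
    rwa [hexp s (Ioo_subset_Icc_self hs), ← div_eq_inv_mul] at hderiv
  · exact intervalIntegrable_logDeriv hab hZ hZ0

lemma exists_int_integral_logDeriv_eq (hab : a ≤ b) (hZ : ∀ s ∈ Icc a b, ContDiffAt ℝ 1 Z s)
    (hZ0 : ∀ s ∈ Icc a b, Z s ≠ 0) (hloop : Z a = Z b) :
    ∃ n : ℤ, ∫ s in a..b, logDeriv Z s = n * (2 * Real.pi * Complex.I) := by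
  obtain ⟨φ, hφ, hexp⟩ := exists_continuousOn_log_of_convex (convex_Icc a b)
    (fun s hs => (hZ s hs).continuousAt.continuousWithinAt) hZ0
  have hends : Complex.exp (φ b) = Complex.exp (φ a) := by
    rw [hexp a (left_mem_Icc.2 hab), hexp b (right_mem_Icc.2 hab), hloop]
  obtain ⟨n, hn⟩ := Complex.exp_eq_exp_iff_exists_int.1 hends
  exact ⟨n, by rw [integral_logDeriv_eq_sub hab hZ hφ hexp, hn, add_sub_cancel_left]⟩

lemma integral_logDeriv_eq_zero_of_nullhomotopic {c d : ℝ} (hab : a ≤ b) (hcd : c ≤ d)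
    (hZ : ∀ s ∈ Icc a b, ContDiffAt ℝ 1 Z s) {g : ℝ × ℝ → ℂ}
    (hg : ContinuousOn g (Icc a b ×ˢ Icc c d)) (hg0 : ∀ x ∈ Icc a b ×ˢ Icc c d, g x ≠ 0)
    (hbottom : ∀ s ∈ Icc a b, g (s, c) = Z s) (htop : ∀ s ∈ Icc a b, g (s, d) = g (a, d))
    (hsides : ∀ u ∈ Icc c d, g (a, u) = g (b, u)) :
    ∫ s in a..b, logDeriv Z s = 0 := by
  obtain ⟨φ, hφ, hexp⟩ := exists_continuousOn_log_of_convex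
    ((convex_Icc a b).prod (convex_Icc c d)) hg hg0
  have ha := left_mem_Icc.2 hab
  have hb := right_mem_Icc.2 hab
  have hc := left_mem_Icc.2 hcd
  have hd := right_mem_Icc.2 hcd
  have hrow : ∀ u ∈ Icc c d, ContinuousOn (fun s => φ (s, u)) (Icc a b) := fun u hu =>
    hφ.comp (by fun_prop) fun s hs => ⟨hs, hu⟩
  have hcolumn : ∀ s ∈ Icc a b, ContinuousOn (fun u => φ (s, u)) (Icc c d) := fun s hs =>
    hφ.comp (by fun_prop) fun u hu => ⟨hs, hu⟩
  have hacross : φ (b, c) - φ (a, c) = φ (b, d) - φ (a, d) :=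
    eq_of_forall_exp_eq isPreconnected_Icc (φ := fun u => φ (b, u) - φ (a, u))
      ((hcolumn b hb).sub (hcolumn a ha)) (w := 1)
      (fun u hu => by
        rw [Complex.exp_sub, hexp (a, u) ⟨ha, hu⟩, hexp (b, u) ⟨hb, hu⟩, hsides u hu,
          div_self (hg0 (b, u) ⟨hb, hu⟩)]) hc hd
  have hconst : φ (b, d) = φ (a, d) :=
    eq_of_forall_exp_eq isPreconnected_Icc (hrow d hd)
      (fun s hs => (hexp _ ⟨hs, hd⟩).trans (htop s hs)) hb ha
  rw [integral_logDeriv_eq_sub hab hZ (hrow c hc)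
    fun s hs => (hexp _ ⟨hs, hc⟩).trans (hbottom s hs), hacross, hconst, sub_self]

end LogarithmicDerivative

section InnerProductSpace

open scoped RealInnerProductSpace

variable {E : Type*} [NormedAddCommGroup E] [InnerProductSpace ℝ E] {a b : E}

lemma norm_mul_norm_add_inner_pos (h : (0 : E) ∉ segment ℝ a b) : 0 < ‖a‖ * ‖b‖ + ⟪a, b⟫ := by
  have ha : a ≠ 0 := fun ha => h (ha ▸ left_mem_segment ℝ a b)
  refine lt_of_le_of_ne (by linarith [neg_le_of_abs_le (abs_real_inner_le_norm a b)])
    fun heq => h ?_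
  have hanti : ‖b‖ • a + ‖a‖ • b = 0 := by
    have := (inner_eq_norm_mul_iff_real (x := a) (y := -b)).1 (by
      rw [inner_neg_right, norm_neg]; linarith)
    rwa [norm_neg, smul_neg, ← sub_eq_zero, sub_neg_eq_add] at this
  refine mem_segment_iff_div.2 ⟨‖b‖, ‖a‖, norm_nonneg b, norm_nonneg a, by positivity, ?_⟩
  rw [div_eq_inv_mul, div_eq_inv_mul, mul_smul, mul_smul, ← smul_add, hanti, smul_zero]

lemma hasDerivAt_norm {c : ℝ → E} {c' : E} {s : ℝ} (hc : HasDerivAt c c' s) (h0 : c s ≠ 0) :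
    HasDerivAt (fun u => ‖c u‖) (⟪c s, c'⟫ / ‖c s‖) s := by
  have h := hc.norm_sq.sqrt (by simpa using h0)
  simp only [Real.sqrt_sq (norm_nonneg _)] at h
  exact h.congr_deriv (mul_div_mul_left _ _ two_ne_zero)

lemma gram_lineMap (a b : E) (τ : ℝ) :
    ‖b - a‖ ^ 2 * ‖AffineMap.lineMap a b τ‖ ^ 2 - ⟪b - a, AffineMap.lineMap a b τ⟫ ^ 2
      = ‖a‖ ^ 2 * ‖b‖ ^ 2 - ⟪a, b⟫ ^ 2 := by
  obtain ⟨e, rfl⟩ : ∃ e, b = a + e := ⟨b - a, (add_sub_cancel a b).symm⟩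
  simp only [AffineMap.lineMap_apply, vsub_eq_sub, vadd_eq_add, add_sub_cancel_left,
    ← real_inner_self_eq_norm_sq, inner_add_left, inner_add_right, real_inner_smul_left,
    real_inner_smul_right, real_inner_comm a e]
  ring

lemma lineMap_ne_zero_of_mem_Icc (h : (0 : E) ∉ segment ℝ a b) {τ : ℝ} (hτ : τ ∈ Icc (0 : ℝ) 1) :
    AffineMap.lineMap a b τ ≠ 0 := fun h0 =>
  h (h0 ▸ (segment_eq_image_lineMap ℝ a b) ▸ mem_image_of_mem _ hτ)

lemma continuousOn_inv_norm_lineMap_pow (h : (0 : E) ∉ segment ℝ a b) (k : ℕ) :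
    ContinuousOn (fun τ : ℝ => (‖AffineMap.lineMap a b τ‖ ^ k)⁻¹) (Icc 0 1) :=
  ContinuousOn.inv₀ (AffineMap.lineMap_continuous.norm.pow k).continuousOn fun _ hτ =>
    pow_ne_zero k (norm_ne_zero_iff.2 (lineMap_ne_zero_of_mem_Icc h hτ))

lemma gram_mul_integral_inv_norm_lineMap_pow_three (h : (0 : E) ∉ segment ℝ a b) :
    (‖a‖ ^ 2 * ‖b‖ ^ 2 - ⟪a, b⟫ ^ 2) * ∫ τ in (0 : ℝ)..1, (‖AffineMap.lineMap a b τ‖ ^ 3)⁻¹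
      = ⟪b - a, b⟫ / ‖b‖ - ⟪b - a, a⟫ / ‖a‖ := by
  have hderiv : ∀ τ ∈ Icc (0 : ℝ) 1,
      HasDerivAt (fun u : ℝ => ⟪b - a, AffineMap.lineMap a b u⟫ / ‖AffineMap.lineMap a b u‖)
        ((‖a‖ ^ 2 * ‖b‖ ^ 2 - ⟪a, b⟫ ^ 2) * (‖AffineMap.lineMap a b τ‖ ^ 3)⁻¹) τ := by
    intro τ hτ
    have hc : HasDerivAt (AffineMap.lineMap a b : ℝ → E) (b - a) τ := AffineMap.hasDerivAt_lineMap
    have hc0 := lineMap_ne_zero_of_mem_Icc h hτ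
    refine (((hasDerivAt_const τ (b - a)).inner ℝ hc).div (hasDerivAt_norm hc hc0)
      (norm_ne_zero_iff.2 hc0)).congr_deriv ?_
    rw [← gram_lineMap a b τ, inner_zero_left, add_zero, real_inner_self_eq_norm_sq,
      real_inner_comm]
    field_simp
  rw [← intervalIntegral.integral_const_mul,
    intervalIntegral.integral_eq_sub_of_hasDerivAt_of_le zero_le_one
      (fun τ hτ => (hderiv τ hτ).continuousAt.continuousWithinAt)
      (fun τ hτ => hderiv τ (Ioo_subset_Icc_self hτ))
      (((continuousOn_inv_norm_lineMap_pow h 3).intervalIntegrable_of_Icc zero_le_one).const_mul _),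
    AffineMap.lineMap_apply_one, AffineMap.lineMap_apply_zero]

end InnerProductSpace

section Space

open Matrix

variable {a b : Fin 3 → ℝ}

lemma dot3_eq_dotProduct (u v : Fin 3 → ℝ) : dot3 u v = u ⬝ᵥ v := (vec3_dotProduct u v).symm

lemma dot3_eq_inner (u v : Fin 3 → ℝ) :
    dot3 u v = inner ℝ (WithLp.toLp 2 u) (WithLp.toLp 2 v) := by
  rw [dot3_eq_dotProduct, dotProduct_comm, EuclideanSpace.inner_toLp_toLp, star_trivial]

lemma norm3_eq_norm (v : Fin 3 → ℝ) : norm3 v = ‖WithLp.toLp 2 v‖ := by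
  rw [norm3, dot3_eq_inner, real_inner_self_eq_norm_sq, Real.sqrt_sq (norm_nonneg _)]

lemma dot3_self_eq_norm3_sq (v : Fin 3 → ℝ) : dot3 v v = norm3 v ^ 2 := by
  rw [norm3_eq_norm, dot3_eq_inner, real_inner_self_eq_norm_sq]

lemma norm3_pos : 0 < norm3 a ↔ a ≠ 0 := by
  rw [norm3_eq_norm, norm_pos_iff, ne_eq, WithLp.toLp_eq_zero]

lemma norm3_sub_comm (u v : Fin 3 → ℝ) : norm3 (u - v) = norm3 (v - u) := by
  rw [norm3_eq_norm, norm3_eq_norm, WithLp.toLp_sub, norm_sub_rev, WithLp.toLp_sub]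

lemma toLp_lineMap {ι : Type*} (a b : ι → ℝ) (τ : ℝ) : WithLp.toLp 2 (AffineMap.lineMap a b τ)
    = AffineMap.lineMap (WithLp.toLp 2 a) (WithLp.toLp 2 b) τ := by
  simp [AffineMap.lineMap_apply]

lemma mem_segment_of_toLp_mem_segment {ι : Type*} {a b x : ι → ℝ}
    (h : WithLp.toLp 2 x ∈ segment ℝ (WithLp.toLp 2 a) (WithLp.toLp 2 b)) : x ∈ segment ℝ a b := by
  rw [segment_eq_image_lineMap] at *
  obtain ⟨τ, hτ, h⟩ := h
  exact ⟨τ, hτ, WithLp.toLp_injective 2 (toLp_lineMap a b τ ▸ h)⟩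

lemma hasDerivAt_norm3 {c : ℝ → Fin 3 → ℝ} {c' : Fin 3 → ℝ} {s : ℝ} (hc : HasDerivAt c c' s)
    (h0 : c s ≠ 0) : HasDerivAt (fun u => norm3 (c u)) (dot3 (c s) c' / norm3 (c s)) s := by
  simp only [norm3_eq_norm, dot3_eq_inner]
  exact hasDerivAt_norm (c := fun u => WithLp.toLp 2 (c u))
    ((PiLp.hasFDerivAt_toLp 2 (c s)).comp_hasDerivAt s hc) (by simpa using h0)

lemma contDiffAt_norm3 {d : WithTop ℕ∞} (ha : a ≠ 0) : ContDiffAt ℝ d norm3 a := by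
  rw [funext norm3_eq_norm]
  exact (PiLp.contDiff_toLp).contDiffAt.norm ℝ (by simpa using ha)

lemma dot3_comm (u v : Fin 3 → ℝ) : dot3 u v = dot3 v u := by
  simp only [dot3_eq_dotProduct, dotProduct_comm]

lemma dot3_smul_left (c : ℝ) (u v : Fin 3 → ℝ) : dot3 (c • u) v = c * dot3 u v := by
  simp only [dot3_eq_dotProduct, smul_dotProduct, smul_eq_mul]

lemma dot3_sub_left (u v w : Fin 3 → ℝ) : dot3 (u - v) w = dot3 u w - dot3 v w := by
  simp only [dot3_eq_dotProduct, sub_dotProduct]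

lemma dot3_cross3_self_eq_gram (a b : Fin 3 → ℝ) :
    dot3 (cross3 a b) (cross3 a b) = norm3 a ^ 2 * norm3 b ^ 2 - dot3 a b ^ 2 := by
  rw [← dot3_self_eq_norm3_sq, ← dot3_self_eq_norm3_sq, sq (dot3 a b)]
  nth_rw 2 [dot3_comm a b]
  simp only [dot3_eq_dotProduct]
  exact cross_dot_cross a b a b

lemma norm3_left_pos (h : 0 ∉ segment ℝ a b) : 0 < norm3 a :=
  norm3_pos.2 (ne_of_mem_of_not_mem (left_mem_segment ℝ a b) h)

lemma norm3_right_pos (h : 0 ∉ segment ℝ a b) : 0 < norm3 b :=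
  norm3_pos.2 (ne_of_mem_of_not_mem (right_mem_segment ℝ a b) h)

lemma norm3_mul_add_dot3_pos (h : 0 ∉ segment ℝ a b) : 0 < norm3 a * norm3 b + dot3 a b := by
  simp only [norm3_eq_norm, dot3_eq_inner]
  exact norm_mul_norm_add_inner_pos fun h0 => h (mem_segment_of_toLp_mem_segment h0)

lemma continuousOn_inv_norm3_lineMap_pow (h : 0 ∉ segment ℝ a b) (k : ℕ) :
    ContinuousOn (fun τ : ℝ => (norm3 (AffineMap.lineMap a b τ) ^ k)⁻¹) (Icc 0 1) := by
  simp only [norm3_eq_norm, toLp_lineMap]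
  exact continuousOn_inv_norm_lineMap_pow (fun h0 => h (mem_segment_of_toLp_mem_segment h0)) k

lemma dot3_cross3_mul_integral_inv_norm3_lineMap_pow_three (h : 0 ∉ segment ℝ a b) :
    dot3 (cross3 a b) (cross3 a b)
        * ∫ τ in (0 : ℝ)..1, (norm3 (AffineMap.lineMap a b τ) ^ 3)⁻¹
      = dot3 (b - a) b / norm3 b - dot3 (b - a) a / norm3 a := by
  rw [dot3_cross3_self_eq_gram]
  simp only [norm3_eq_norm, dot3_eq_inner, toLp_lineMap, WithLp.toLp_sub]
  exact gram_mul_integral_inv_norm_lineMap_pow_three fun h0 =>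
    h (mem_segment_of_toLp_mem_segment h0)

lemma cross3_cross3_eq_smul_of_dot3_eq_zero {u v w : Fin 3 → ℝ} (h : dot3 v w = 0) :
    cross3 (cross3 u v) w = dot3 u w • v := by
  rw [dot3_eq_dotProduct] at *
  rw [cross3, cross3, cross_cross_eq_smul_sub_smul, h, zero_smul, sub_zero]

lemma dot3_cross3_left_self (a b : Fin 3 → ℝ) : dot3 (cross3 a b) a = 0 := by
  rw [dot3_comm, dot3_eq_dotProduct]
  exact dot_self_cross a b

lemma dot3_cross3_right_self (a b : Fin 3 → ℝ) : dot3 (cross3 a b) b = 0 := by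
  rw [dot3_comm, dot3_eq_dotProduct]
  exact dot_cross_self a b

lemma dot3_cross3_neg_right (u v w : Fin 3 → ℝ) :
    dot3 (cross3 u v) (-w) = dot3 (cross3 v u) w := by
  rw [dot3_eq_dotProduct, dot3_eq_dotProduct, dotProduct_neg, ← neg_dotProduct]
  exact congrArg (· ⬝ᵥ w) (cross_anticomm u v)

lemma dot3_sub_cross3 (a b : Fin 3 → ℝ) : dot3 (b - a) (cross3 a b) = 0 := by
  rw [dot3_sub_left, dot3_comm, dot3_cross3_right_self, dot3_comm, dot3_cross3_left_self, sub_zero]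

lemma norm3_smul (c : ℝ) (v : Fin 3 → ℝ) : norm3 (c • v) = |c| * norm3 v := by
  rw [norm3_eq_norm, norm3_eq_norm, WithLp.toLp_smul, norm_smul, Real.norm_eq_abs]

lemma cross3_smul_left (c : ℝ) (u v : Fin 3 → ℝ) : cross3 (c • u) v = c • cross3 u v :=
  LinearMap.map_smul₂ crossProduct c u v

lemma cross3_zero_left (v : Fin 3 → ℝ) : cross3 0 v = 0 := LinearMap.map_zero₂ crossProduct v

lemma cross3_zero_right (u : Fin 3 → ℝ) : cross3 u 0 = 0 := map_zero (crossProduct u)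

lemma Phi_eq_div_smul_cross3 {o o' r a b : Fin 3 → ℝ} (ha : o - r = a) (hb : o' - r = b) :
    Phi o o' r = ((dot3 (b - a) b / norm3 b - dot3 (b - a) a / norm3 a)
      / dot3 (cross3 a b) (cross3 a b)) • cross3 a b := by
  have he : o' - o = b - a := by rw [← ha, ← hb, sub_sub_sub_cancel_right]
  simp only [Phi, ha, hb, he]
  by_cases hw : cross3 a b = 0
  · rw [hw, cross3_zero_right]
    simp only [smul_zero, cross3_zero_left, sub_self]
  have he0 : norm3 (b - a) ≠ 0 := by
    refine (norm3_pos.2 fun h => hw ?_).ne'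
    rw [sub_eq_zero.1 h, cross3]
    exact cross_self a
  have hnorm : norm3 (cross3 (b - a) (cross3 a b)) ^ 2
      = norm3 (b - a) ^ 2 * dot3 (cross3 a b) (cross3 a b) := by
    rw [← dot3_self_eq_norm3_sq, dot3_cross3_self_eq_gram, dot3_sub_cross3,
      ← dot3_self_eq_norm3_sq (cross3 a b)]
    ring
  rw [cross3_smul_left, cross3_smul_left, norm3_smul, abs_of_nonneg (by positivity), inv_pow,
    mul_pow, hnorm, cross3_cross3_eq_smul_of_dot3_eq_zero (dot3_cross3_left_self a b),
    cross3_cross3_eq_smul_of_dot3_eq_zero (dot3_cross3_right_self a b)]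
  simp only [smul_smul, ← sub_smul]
  congr 1
  field_simp

lemma Phi_eq_integral_smul_cross3 {o o' r : Fin 3 → ℝ} (h : 0 ∉ segment ℝ (o - r) (o' - r)) :
    Phi o o' r = (∫ τ in (0 : ℝ)..1, (norm3 (AffineMap.lineMap (o - r) (o' - r) τ) ^ 3)⁻¹)
      • cross3 (o - r) (o' - r) := by
  rw [Phi_eq_div_smul_cross3 rfl rfl, ← dot3_cross3_mul_integral_inv_norm3_lineMap_pow_three h]
  by_cases hw : cross3 (o - r) (o' - r) = 0
  · rw [hw, smul_zero, smul_zero]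
  · rw [mul_div_cancel_left₀ _ (dot3_self_eq_norm3_sq _ ▸ pow_ne_zero 2 (norm3_pos.2 hw).ne')]

lemma Phi_eq_smul_cross3 {o o' r a b : Fin 3 → ℝ} (ha : o - r = a) (hb : o' - r = b)
    (h : 0 < norm3 a * norm3 b + dot3 a b) :
    Phi o o' r = ((norm3 a + norm3 b) / (norm3 a * norm3 b * (norm3 a * norm3 b + dot3 a b)))
      • cross3 a b := by
  rw [Phi_eq_div_smul_cross3 ha hb]
  by_cases hw : cross3 a b = 0
  · rw [hw, smul_zero, smul_zero]
  have ha0 : norm3 a ≠ 0 := (norm3_pos.2 fun h0 => hw (h0 ▸ cross3_zero_left b)).ne'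
  have hb0 : norm3 b ≠ 0 := (norm3_pos.2 fun h0 => hw (h0 ▸ cross3_zero_right a)).ne'
  have hadd := h.ne'
  have hgram : dot3 (cross3 a b) (cross3 a b)
      = (norm3 a * norm3 b + dot3 a b) * (norm3 a * norm3 b - dot3 a b) := by
    rw [dot3_cross3_self_eq_gram]
    ring
  have hsub : norm3 a * norm3 b - dot3 a b ≠ 0 := fun h0 => by
    rw [dot3_self_eq_norm3_sq, h0, mul_zero] at hgram
    exact pow_ne_zero 2 (norm3_pos.2 hw).ne' hgram
  have hnum : dot3 (b - a) b / norm3 b - dot3 (b - a) a / norm3 a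
      = (norm3 a + norm3 b) * (norm3 a * norm3 b - dot3 a b) / (norm3 a * norm3 b) := by
    rw [dot3_sub_left, dot3_sub_left, dot3_self_eq_norm3_sq, dot3_self_eq_norm3_sq, dot3_comm b a]
    field_simp
    ring
  rw [hgram, hnum]
  congr 1
  field_simp

end Space

section BlochSphere

/-- The unit vector in the direction of `a` (and `0` if `a = 0`). -/
def unit3 (a : Fin 3 → ℝ) : Fin 3 → ℝ := (norm3 a)⁻¹ • a

/-- The derivative of `unit3` at `a ≠ 0` in the direction `v`. -/
def unit3Deriv (a v : Fin 3 → ℝ) : Fin 3 → ℝ :=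
  (norm3 a)⁻¹ • v - (dot3 a v / norm3 a ^ 3) • a

/-- The spin operator `(v 0 • σ₁ + v 1 • σ₂ + v 2 • σ₃) / 2` in the direction `v`, where the `σᵢ`
are the Pauli matrices. -/
def spin : (Fin 3 → ℝ) →ₗ[ℝ] Matrix (Fin 2) (Fin 2) ℂ where
  toFun v := !![(v 2 : ℂ) / 2, (v 0 - v 1 * Complex.I) / 2;
    (v 0 + v 1 * Complex.I) / 2, -(v 2 : ℂ) / 2]
  map_add' u v := by
    ext i j
    fin_cases i <;> fin_cases j <;> simp <;> ring
  map_smul' c v := by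
    ext i j
    fin_cases i <;> fin_cases j <;> simp <;> ring

/-- The projection onto the line in `ℂ²` which the point `n` of the unit sphere represents under
the identification of the sphere with the complex projective line (the Bloch sphere). -/
def bloch (n : Fin 3 → ℝ) : Matrix (Fin 2) (Fin 2) ℂ := (1 / 2 : ℂ) • 1 + spin n

variable {a b : Fin 3 → ℝ}

lemma dot3_unit3_unit3 (a b : Fin 3 → ℝ) :
    dot3 (unit3 a) (unit3 b) = dot3 a b / (norm3 a * norm3 b) := by
  simp only [dot3, unit3, Pi.smul_apply, smul_eq_mul]
  ring

lemma dot3_unit3_self (ha : a ≠ 0) : dot3 (unit3 a) (unit3 a) = 1 := by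
  rw [dot3_unit3_unit3, dot3_self_eq_norm3_sq, ← sq, div_self (pow_pos (norm3_pos.2 ha) 2).ne']

lemma hasDerivAt_unit3 {c : ℝ → Fin 3 → ℝ} {c' : Fin 3 → ℝ} {s : ℝ} (hc : HasDerivAt c c' s)
    (h0 : c s ≠ 0) : HasDerivAt (fun u => unit3 (c u)) (unit3Deriv (c s) c') s := by
  refine (((hasDerivAt_norm3 hc h0).fun_inv (norm3_pos.2 h0).ne').smul hc).congr_deriv ?_
  rw [unit3Deriv, sub_eq_add_neg, ← neg_smul, neg_div, div_div, ← pow_succ']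

lemma contDiffAt_unit3 {d : WithTop ℕ∞} (ha : a ≠ 0) : ContDiffAt ℝ d unit3 a :=
  ((contDiffAt_norm3 ha).inv (norm3_pos.2 ha).ne').smul contDiffAt_id

lemma dot3_cross3_unit3_unit3Deriv_left (a b v : Fin 3 → ℝ) :
    dot3 (cross3 (unit3 a) (unit3 b)) (unit3Deriv a v)
      = dot3 (cross3 a b) v / (norm3 a ^ 2 * norm3 b) := by
  simp only [dot3, unit3, unit3Deriv, cross3, cross_apply, Pi.smul_apply, Pi.sub_apply, smul_eq_mul,
    Matrix.cons_val]
  ring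

lemma dot3_cross3_unit3_unit3Deriv_right (a b v : Fin 3 → ℝ) :
    dot3 (cross3 (unit3 a) (unit3 b)) (unit3Deriv b v)
      = dot3 (cross3 a b) v / (norm3 a * norm3 b ^ 2) := by
  simp only [dot3, unit3, unit3Deriv, cross3, cross_apply, Pi.smul_apply, Pi.sub_apply, smul_eq_mul,
    Matrix.cons_val]
  ring

lemma bloch_eq (n : Fin 3 → ℝ) : bloch n = !![(1 + n 2 : ℂ) / 2, (n 0 - n 1 * Complex.I) / 2;
    (n 0 + n 1 * Complex.I) / 2, (1 - n 2 : ℂ) / 2] := by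
  ext i j
  fin_cases i <;> fin_cases j <;> simp [bloch, spin] <;> ring

lemma det_bloch {n : Fin 3 → ℝ} (hn : dot3 n n = 1) : (bloch n).det = 0 := by
  have h : (n 0 * n 0 + n 1 * n 1 + n 2 * n 2 : ℂ) = 1 := mod_cast hn
  rw [bloch_eq, Matrix.det_fin_two_of]
  linear_combination (-1 / 4 : ℂ) * h + (n 1 : ℂ) ^ 2 / 4 * Complex.I_sq

lemma isRankOneIdempotent_of_det_eq_zero {R : Type*} [CommRing R] {p : Matrix (Fin 2) (Fin 2) R}
    (hdet : p.det = 0) (htrace : p.trace = 1) : IsRankOneIdempotent p := by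
  refine ⟨htrace, fun X => ?_⟩
  rw [Matrix.det_fin_two] at hdet
  ext i j
  fin_cases i <;> fin_cases j <;>
    simp only [Matrix.mul_apply, Matrix.trace_fin_two, Fin.sum_univ_two, Fin.zero_eta, Fin.mk_one,
      Matrix.smul_apply, smul_eq_mul]
  · linear_combination -X 1 1 * hdet
  · linear_combination X 0 1 * hdet
  · linear_combination X 1 0 * hdet
  · linear_combination -X 0 0 * hdet

lemma isRankOneIdempotent_bloch {n : Fin 3 → ℝ} (hn : dot3 n n = 1) :
    IsRankOneIdempotent (bloch n) := by
  refine isRankOneIdempotent_of_det_eq_zero (det_bloch hn) ?_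
  rw [bloch_eq, Matrix.trace_fin_two_of]
  ring

lemma trace_bloch_mul_bloch (u v : Fin 3 → ℝ) :
    (bloch u * bloch v).trace = ((1 + dot3 u v) / 2 : ℝ) := by
  rw [bloch_eq, bloch_eq, Matrix.mul_fin_two, Matrix.trace_fin_two_of]
  simp only [dot3]
  push_cast
  linear_combination (-(u 1 : ℂ) * v 1 / 2) * Complex.I_sq

lemma im_trace_bloch_mul_bloch_mul_spin (u v w : Fin 3 → ℝ) :
    (bloch u * bloch v * spin w).trace.im = dot3 (cross3 u v) w / 4 := by
  rw [bloch_eq, bloch_eq, Matrix.mul_fin_two]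
  simp [Matrix.trace_fin_two, spin, dot3, cross3, cross_apply]
  ring

open scoped Matrix.Norms.Operator in
lemma contDiff_bloch {d : WithTop ℕ∞} : ContDiff ℝ d bloch :=
  contDiff_const.add spin.toContinuousLinearMap.contDiff

open scoped Matrix.Norms.Operator in
lemma hasDerivAt_bloch_unit3 {c : ℝ → Fin 3 → ℝ} {c' : Fin 3 → ℝ} {s : ℝ}
    (hc : HasDerivAt c c' s) (h0 : c s ≠ 0) :
    HasDerivAt (fun u => bloch (unit3 (c u))) (spin (unit3Deriv (c s) c')) s :=
  (spin.toContinuousLinearMap.hasFDerivAt.comp_hasDerivAt s (hasDerivAt_unit3 hc h0)).const_add _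

lemma trace_bloch_unit3_mul (h : 0 ∉ segment ℝ a b) :
    (bloch (unit3 b) * bloch (unit3 a)).trace
      = ((norm3 a * norm3 b + dot3 a b) / (2 * (norm3 a * norm3 b)) : ℝ) := by
  have ha := norm3_left_pos h
  have hb := norm3_right_pos h
  rw [Matrix.trace_mul_comm, trace_bloch_mul_bloch, dot3_unit3_unit3]
  congr 1
  field_simp

lemma trace_bloch_unit3_mul_ne_zero (h : 0 ∉ segment ℝ a b) :
    (bloch (unit3 b) * bloch (unit3 a)).trace ≠ 0 := by
  have ha := norm3_left_pos h
  have hb := norm3_right_pos h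
  have hadd := norm3_mul_add_dot3_pos h
  rw [trace_bloch_unit3_mul h, Complex.ofReal_ne_zero]
  positivity

end BlochSphere

section PolygonalLoop

/-- The image of the polygonal path with vertices `P 0, …, P m`, which is the obstacle skeleton. -/
def polygon (m : ℕ) (P : ℕ → Fin 3 → ℝ) : Set (Fin 3 → ℝ) := polyLoop P '' Icc 0 (m : ℝ)

variable {m i : ℕ} {P : ℕ → Fin 3 → ℝ} {r : Fin 3 → ℝ}

lemma polyLoop_of_mem_Ico (P : ℕ → Fin 3 → ℝ) {t : ℝ} (ht : t ∈ Ico (i : ℝ) (i + 1)) :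
    polyLoop P t = AffineMap.lineMap (P i) (P (i + 1)) (t - i) := by
  have hfloor : ⌊t⌋ = i := Int.floor_eq_iff.2 (mod_cast ht)
  rw [polyLoop, hfloor, Int.toNat_natCast, Int.cast_natCast, AffineMap.lineMap_apply, vsub_eq_sub,
    vadd_eq_add, add_comm]

lemma vertex_mem_polygon (P : ℕ → Fin 3 → ℝ) (hi : i ≤ m) : P i ∈ polygon m P := by
  refine ⟨i, ⟨i.cast_nonneg, mod_cast hi⟩, ?_⟩
  rw [polyLoop_of_mem_Ico P ⟨le_rfl, by linarith⟩, sub_self, AffineMap.lineMap_apply_zero]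

lemma segment_subset_polygon (P : ℕ → Fin 3 → ℝ) (hi : i < m) :
    segment ℝ (P i) (P (i + 1)) ⊆ polygon m P := by
  have him : (i : ℝ) + 1 ≤ m := mod_cast hi
  rw [segment_eq_image_lineMap]
  rintro _ ⟨τ, hτ, rfl⟩
  obtain h1 | rfl := hτ.2.lt_or_eq
  · refine ⟨i + τ, ⟨add_nonneg i.cast_nonneg hτ.1, by linarith⟩, ?_⟩
    rw [polyLoop_of_mem_Ico (i := i) P ⟨by linarith [hτ.1], by linarith⟩, add_sub_cancel_left]
  · rw [AffineMap.lineMap_apply_one]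
    exact vertex_mem_polygon P hi

lemma vertex_sub_ne_zero (hr : r ∉ polygon m P) (hi : i ≤ m) : P i - r ≠ 0 :=
  sub_ne_zero.2 (ne_of_mem_of_not_mem (vertex_mem_polygon P hi) hr)

lemma lineMap_sub_const {V : Type*} [AddCommGroup V] [Module ℝ V] (a b r : V) (τ : ℝ) :
    AffineMap.lineMap (a - r) (b - r) τ = AffineMap.lineMap a b τ - r := by
  simpa using (AffineMap.lineMap_vsub_lineMap a b r r τ).symm

lemma zero_notMem_segment_sub (hr : r ∉ polygon m P) (hi : i < m) :
    0 ∉ segment ℝ (P i - r) (P (i + 1) - r) := by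
  rw [segment_eq_image_lineMap]
  rintro ⟨τ, hτ, h⟩
  rw [lineMap_sub_const, sub_eq_zero] at h
  exact hr (segment_subset_polygon P hi
    (h ▸ segment_eq_image_lineMap ℝ (P i) (P (i + 1)) ▸ mem_image_of_mem _ hτ))

lemma deriv_polyLoop_of_mem_Ioo (P : ℕ → Fin 3 → ℝ) {t : ℝ} (ht : t ∈ Ioo (i : ℝ) (i + 1)) :
    deriv (polyLoop P) t = P (i + 1) - P i := by
  have hlocal : polyLoop P =ᶠ[𝓝 t] fun u => AffineMap.lineMap (P i) (P (i + 1)) (u - i) := by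
    filter_upwards [isOpen_Ioo.mem_nhds ht] with u hu
    exact polyLoop_of_mem_Ico P (Ioo_subset_Ico_self hu)
  rw [hlocal.deriv_eq, deriv_comp_sub_const]
  exact AffineMap.hasDerivAt_lineMap.deriv

/-- The integrand of the Gauss linking integral at the point `r` moving with velocity `v` and the
point `polyLoop P t`. -/
def gaussIntegrand (P : ℕ → Fin 3 → ℝ) (r v : Fin 3 → ℝ) (t : ℝ) : ℝ :=
  dot3 (cross3 v (deriv (polyLoop P) t)) (r - polyLoop P t) / norm3 (r - polyLoop P t) ^ 3

lemma eqOn_gaussIntegrand_edge (P : ℕ → Fin 3 → ℝ) (i : ℕ) (r v : Fin 3 → ℝ) :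
    EqOn (gaussIntegrand P r v) (fun t => dot3 (cross3 (P i - r) (P (i + 1) - r)) v
      * (norm3 (AffineMap.lineMap (P i - r) (P (i + 1) - r) (t - i)) ^ 3)⁻¹)
      (Ioo i (i + 1 : ℕ)) := by
  intro t ht
  rw [Nat.cast_succ] at ht
  dsimp only
  rw [gaussIntegrand, deriv_polyLoop_of_mem_Ioo P ht,
    polyLoop_of_mem_Ico P (Ioo_subset_Ico_self ht), lineMap_sub_const, norm3_sub_comm,
    div_eq_mul_inv]
  congr 1
  simp only [dot3, cross3, cross_apply, AffineMap.lineMap_apply, vsub_eq_sub, vadd_eq_add,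
    Pi.add_apply, Pi.sub_apply, Pi.smul_apply, smul_eq_mul, Matrix.cons_val]
  ring

lemma intervalIntegrable_gaussIntegrand_edge (h : 0 ∉ segment ℝ (P i - r) (P (i + 1) - r))
    (v : Fin 3 → ℝ) :
    IntervalIntegrable (gaussIntegrand P r v) MeasureTheory.volume i (i + 1 : ℕ) := by
  have hi : (i : ℝ) ≤ (i + 1 : ℕ) := mod_cast i.le_succ
  refine IntervalIntegrable.congr_uIoo ?_ (uIoo_of_le hi ▸ (eqOn_gaussIntegrand_edge P i r v).symm)
  have hunit := (continuousOn_inv_norm3_lineMap_pow h 3).intervalIntegrable_of_Icc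
    (μ := MeasureTheory.volume) zero_le_one
  simpa [add_comm] using (hunit.comp_sub_right (i : ℝ)).const_mul _

lemma integral_gaussIntegrand_edge (h : 0 ∉ segment ℝ (P i - r) (P (i + 1) - r))
    (v : Fin 3 → ℝ) :
    ∫ t in (i : ℝ)..(i + 1 : ℕ), gaussIntegrand P r v t = dot3 (Phi (P i) (P (i + 1)) r) v := by
  rw [intervalIntegral.integral_congr_Ioo_of_le (mod_cast i.le_succ)
      (eqOn_gaussIntegrand_edge P i r v),
    intervalIntegral.integral_const_mul,
    intervalIntegral.integral_comp_sub_right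
      (fun τ => (norm3 (AffineMap.lineMap (P i - r) (P (i + 1) - r) τ) ^ 3)⁻¹),
    Phi_eq_integral_smul_cross3 h, dot3_smul_left, mul_comm, Nat.cast_succ, sub_self,
    add_sub_cancel_left]

lemma integral_gaussIntegrand (hr : r ∉ polygon m P) (v : Fin 3 → ℝ) :
    ∫ t in (0 : ℝ)..m, gaussIntegrand P r v t
      = ∑ i ∈ Finset.range m, dot3 (Phi (P i) (P (i + 1)) r) v := by
  have h := intervalIntegral.sum_integral_adjacent_intervals (a := fun k : ℕ => (k : ℝ)) (n := m)
    fun i hi => intervalIntegrable_gaussIntegrand_edge (zero_notMem_segment_sub hr hi) v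
  rw [Nat.cast_zero] at h
  rw [← h]
  exact Finset.sum_congr rfl fun i hi =>
    integral_gaussIntegrand_edge (zero_notMem_segment_sub hr (Finset.mem_range.1 hi)) v

lemma dot3_Bfield (m : ℕ) (P : ℕ → Fin 3 → ℝ) (r v : Fin 3 → ℝ) : dot3 (Bfield m P r) v
    = (4 * Real.pi)⁻¹ * ∑ i ∈ Finset.range m, dot3 (Phi (P i) (P (i + 1)) r) v := by
  simp only [Bfield, dot3_smul_left]
  simp only [dot3_eq_dotProduct, sum_dotProduct]

/-- The integral `∮_γ B(r) · dr` of the field of the polygon along `γ`. -/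
def circulation (m : ℕ) (P : ℕ → Fin 3 → ℝ) (γ : ℝ → Fin 3 → ℝ) : ℝ :=
  ∫ t in (0 : ℝ)..1, dot3 (Bfield m P (γ t)) (deriv γ t)

lemma circulation_eq_gaussLinkingIntegral {γ : ℝ → Fin 3 → ℝ}
    (hdisjoint : ∀ s ∈ Icc (0 : ℝ) 1, γ s ∉ polygon m P) :
    circulation m P γ = gaussLinkingIntegral m P γ := by
  rw [circulation, gaussLinkingIntegral, ← intervalIntegral.integral_const_mul]
  refine intervalIntegral.integral_congr fun s hs => ?_
  rw [uIcc_of_le zero_le_one] at hs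
  simp only [dot3_Bfield, ← integral_gaussIntegrand (hdisjoint s hs), gaussIntegrand]

end PolygonalLoop

section Holonomy

variable {m k : ℕ} {P : ℕ → Fin 3 → ℝ} {r : Fin 3 → ℝ}

/-- The Bloch projection of the direction in which the vertex `P k` is seen from `r`. -/
def vertexProjection (P : ℕ → Fin 3 → ℝ) (r : Fin 3 → ℝ) (k : ℕ) : Matrix (Fin 2) (Fin 2) ℂ :=
  bloch (unit3 (P k - r))

/-- The holonomy of the spherical polygon formed by the directions from `r` to `P 0, …, P m`: a
complex number whose phase is half the solid angle which the polygon subtends at `r`. -/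
def holonomy (m : ℕ) (P : ℕ → Fin 3 → ℝ) (r : Fin 3 → ℝ) : ℂ :=
  (pathProd (vertexProjection P r) m).trace

lemma isRankOneIdempotent_vertexProjection (hr : P k - r ≠ 0) :
    IsRankOneIdempotent (vertexProjection P r k) :=
  isRankOneIdempotent_bloch (dot3_unit3_self hr)

lemma holonomy_ne_zero (hclosed : P m = P 0) (hr : r ∉ polygon m P) : holonomy m P r ≠ 0 :=
  trace_pathProd_ne_zero
    (fun _ hk => isRankOneIdempotent_vertexProjection (vertex_sub_ne_zero hr hk))
    (by simp only [vertexProjection, hclosed])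
    fun _ hk => trace_bloch_unit3_mul_ne_zero (zero_notMem_segment_sub hr hk)

open scoped Matrix.Norms.Operator in
lemma contDiffAt_vertexProjection {d : WithTop ℕ∞} (hr : P k - r ≠ 0) :
    ContDiffAt ℝ d (fun x => vertexProjection P x k) r :=
  contDiff_bloch.contDiffAt.comp r ((contDiffAt_unit3 hr).comp r
    (contDiffAt_const.sub contDiffAt_id))

open scoped Matrix.Norms.Operator in
lemma contDiffAt_pathProd_vertexProjection {d : WithTop ℕ∞} (hr : ∀ k ≤ m, P k - r ≠ 0) :
    ContDiffAt ℝ d (fun x => pathProd (vertexProjection P x) m) r := by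
  induction m with
  | zero => exact contDiffAt_vertexProjection (hr 0 le_rfl)
  | succ m ih =>
    exact (ih fun k hk => hr k (hk.trans m.le_succ)).mul
      (contDiffAt_vertexProjection (hr (m + 1) le_rfl))

open scoped Matrix.Norms.Operator in
lemma contDiffAt_holonomy {d : WithTop ℕ∞} (hr : r ∉ polygon m P) :
    ContDiffAt ℝ d (holonomy m P) r :=
  (Matrix.traceLinearMap (Fin 2) ℝ ℂ).toContinuousLinearMap.contDiff.contDiffAt.comp r
    (contDiffAt_pathProd_vertexProjection fun _ hk => vertex_sub_ne_zero hr hk)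

lemma im_stepLogDeriv_vertexProjection (h : 0 ∉ segment ℝ (P k - r) (P (k + 1) - r))
    (v : Fin 3 → ℝ) :
    (stepLogDeriv (vertexProjection P r) (fun i => spin (unit3Deriv (P i - r) (-v))) k).im
      = dot3 (Phi (P k) (P (k + 1)) r) v / 2 := by
  have ha := (norm3_left_pos h).ne'
  have hb := (norm3_right_pos h).ne'
  rw [stepLogDeriv, vertexProjection, vertexProjection, trace_bloch_unit3_mul h,
    Complex.div_ofReal_im, mul_add, Matrix.trace_add, Complex.add_im,
    im_trace_bloch_mul_bloch_mul_spin, im_trace_bloch_mul_bloch_mul_spin,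
    dot3_cross3_unit3_unit3Deriv_left, dot3_cross3_unit3_unit3Deriv_right,
    Phi_eq_smul_cross3 rfl rfl (norm3_mul_add_dot3_pos h), dot3_smul_left,
    dot3_cross3_neg_right]
  field_simp
  ring

variable {γ : ℝ → Fin 3 → ℝ} {s : ℝ}

open scoped Matrix.Norms.Operator in
lemma hasDerivAt_holonomy_comp (hclosed : P m = P 0) {γ' : Fin 3 → ℝ} (hγ : HasDerivAt γ γ' s)
    (hr : γ s ∉ polygon m P) :
    HasDerivAt (fun u => holonomy m P (γ u)) ((∑ i ∈ Finset.range m,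
      stepLogDeriv (vertexProjection P (γ s)) (fun i => spin (unit3Deriv (P i - γ s) (-γ'))) i)
        * holonomy m P (γ s)) s := by
  have hne : ∀ k ≤ m, P k - γ s ≠ 0 := fun k hk => vertex_sub_ne_zero hr hk
  refine hasDerivAt_trace_pathProd (p := fun u => vertexProjection P (γ u)) (fun k hk => ?_)
    (fun k hk => hasDerivAt_bloch_unit3 (hγ.const_sub (P k)) (hne k hk))
    (fun u => by simp only [vertexProjection, hclosed])
    fun k hk => trace_bloch_unit3_mul_ne_zero (zero_notMem_segment_sub hr hk)
  filter_upwards [(hγ.const_sub (P k)).continuousAt.eventually_ne (hne k hk)] with u hu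
  exact isRankOneIdempotent_vertexProjection hu

lemma im_logDeriv_holonomy_comp (hclosed : P m = P 0) (hγ : DifferentiableAt ℝ γ s)
    (hr : γ s ∉ polygon m P) : (logDeriv (fun u => holonomy m P (γ u)) s).im
      = 2 * Real.pi * dot3 (Bfield m P (γ s)) (deriv γ s) := by
  rw [logDeriv_apply, (hasDerivAt_holonomy_comp hclosed hγ.hasDerivAt hr).deriv,
    mul_div_cancel_right₀ _ (holonomy_ne_zero hclosed hr), Complex.im_sum, dot3_Bfield,
    Finset.sum_congr rfl fun i hi => im_stepLogDeriv_vertexProjection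
      (zero_notMem_segment_sub hr (Finset.mem_range.1 hi)) (deriv γ s), ← Finset.sum_div]
  field_simp
  ring

lemma contDiffAt_holonomy_comp (hγ : ContDiff ℝ 1 γ) (hr : γ s ∉ polygon m P) :
    ContDiffAt ℝ 1 (fun u => holonomy m P (γ u)) s :=
  (contDiffAt_holonomy hr).comp s hγ.contDiffAt

lemma im_integral_logDeriv_holonomy_comp (hclosed : P m = P 0) (hγ : ContDiff ℝ 1 γ)
    (hdisjoint : ∀ s ∈ Icc (0 : ℝ) 1, γ s ∉ polygon m P) :
    (∫ s in (0 : ℝ)..1, logDeriv (fun u => holonomy m P (γ u)) s).im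
      = 2 * Real.pi * circulation m P γ := by
  have hintegrable := intervalIntegrable_logDeriv zero_le_one
    (fun s hs => contDiffAt_holonomy_comp hγ (hdisjoint s hs))
    fun s hs => holonomy_ne_zero hclosed (hdisjoint s hs)
  rw [← Complex.imCLM_apply, ← Complex.imCLM.intervalIntegral_comp_comm hintegrable, circulation,
    ← intervalIntegral.integral_const_mul]
  refine intervalIntegral.integral_congr fun s hs => ?_
  rw [uIcc_of_le zero_le_one] at hs
  exact im_logDeriv_holonomy_comp hclosed (hγ.differentiable one_ne_zero s) (hdisjoint s hs)

lemma exists_int_circulation_eq (hclosed : P m = P 0) (hγ : ContDiff ℝ 1 γ)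
    (hloop : γ 0 = γ 1) (hdisjoint : ∀ s ∈ Icc (0 : ℝ) 1, γ s ∉ polygon m P) :
    ∃ n : ℤ, circulation m P γ = n := by
  obtain ⟨n, hn⟩ := exists_int_integral_logDeriv_eq zero_le_one
    (fun s hs => contDiffAt_holonomy_comp hγ (hdisjoint s hs))
    (fun s hs => holonomy_ne_zero hclosed (hdisjoint s hs)) (by rw [hloop])
  have him := im_integral_logDeriv_holonomy_comp hclosed hγ hdisjoint
  refine ⟨n, mul_left_cancel₀ Real.two_pi_pos.ne' (him.symm.trans ?_)⟩
  rw [hn]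
  simp [mul_comm]

lemma circulation_eq_zero_of_nullhomotopic (hclosed : P m = P 0) (hγ : ContDiff ℝ 1 γ)
    {η : ℝ × ℝ → Fin 3 → ℝ} (hη : ContinuousOn η (Icc 0 1 ×ˢ Icc 0 1))
    (hbottom : ∀ s ∈ Icc (0 : ℝ) 1, η (s, 0) = γ s)
    (htop : ∀ s ∈ Icc (0 : ℝ) 1, η (s, 1) = η (0, 1))
    (hsides : ∀ u ∈ Icc (0 : ℝ) 1, η (0, u) = η (1, u))
    (havoid : ∀ x ∈ Icc (0 : ℝ) 1 ×ˢ Icc (0 : ℝ) 1, η x ∉ polygon m P) :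
    circulation m P γ = 0 := by
  have hdisjoint : ∀ s ∈ Icc (0 : ℝ) 1, γ s ∉ polygon m P := fun s hs =>
    hbottom s hs ▸ havoid (s, 0) ⟨hs, left_mem_Icc.2 zero_le_one⟩
  have hzero : ∫ s in (0 : ℝ)..1, logDeriv (fun u => holonomy m P (γ u)) s = 0 :=
    integral_logDeriv_eq_zero_of_nullhomotopic zero_le_one zero_le_one
      (g := fun x => holonomy m P (η x))
      (fun s hs => contDiffAt_holonomy_comp hγ (hdisjoint s hs))
      (fun x hx => (contDiffAt_holonomy (d := 0) (havoid x hx)).continuousAt.comp_continuousWithinAt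
        (hη x hx))
      (fun x hx => holonomy_ne_zero hclosed (havoid x hx))
      (fun s hs => by rw [hbottom s hs]) (fun s hs => by rw [htop s hs])
      fun u hu => by rw [hsides u hu]
  have him := im_integral_logDeriv_holonomy_comp hclosed hγ hdisjoint
  rw [hzero, Complex.zero_im] at him
  exact (mul_eq_zero.1 him.symm).resolve_left Real.two_pi_pos.ne'

end Holonomy

/-- For a closed polygonal obstacle skeleton `L` in ℝ³ and a smooth closed robot loop `γ`
disjoint from `L`, the circulation `∮_γ B(r)·dr` of the summed analytic Biot–Savart field
equals the Gauss linking number of `γ` and `L`; in particular it is an integer, and it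
vanishes when `γ` does not enclose `L` (i.e. when `γ` is null-homotopic in the complement
of `L`). -/
theorem hSignature_eq_linkingNumber (m : ℕ) (hm : 0 < m) (P : ℕ → Fin 3 → ℝ)
    (hclosed : P m = P 0)
    (γ : ℝ → Fin 3 → ℝ) (hγ : ContDiff ℝ 1 γ) (hγloop : γ 0 = γ 1)
    (hdisjoint : ∀ s ∈ Icc (0 : ℝ) 1, ∀ t ∈ Icc (0 : ℝ) (m : ℝ), γ s ≠ polyLoop P t) :
    (∫ t in (0 : ℝ)..1, dot3 (Bfield m P (γ t)) (deriv γ t))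
        = gaussLinkingIntegral m P γ ∧
    (∃ n : ℤ, gaussLinkingIntegral m P γ = n) ∧
    ((∃ η : ℝ × ℝ → Fin 3 → ℝ, Continuous η ∧
        (∀ s ∈ Icc (0 : ℝ) 1, η (s, 0) = γ s) ∧
        (∀ s ∈ Icc (0 : ℝ) 1, ∃ c, η (s, 1) = c ∧ ∀ s' ∈ Icc (0 : ℝ) 1, η (s', 1) = c) ∧
        (∀ u ∈ Icc (0 : ℝ) 1, η (0, u) = η (1, u)) ∧
        (∀ p ∈ Icc (0 : ℝ) 1 ×ˢ Icc (0 : ℝ) 1,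
          ∀ t ∈ Icc (0 : ℝ) (m : ℝ), η p ≠ polyLoop P t)) →
      gaussLinkingIntegral m P γ = 0) := by
  have hoff : ∀ s ∈ Icc (0 : ℝ) 1, γ s ∉ polygon m P := fun s hs ⟨t, ht, heq⟩ =>
    hdisjoint s hs t ht heq.symm
  have hcirc : circulation m P γ = gaussLinkingIntegral m P γ :=
    circulation_eq_gaussLinkingIntegral hoff
  rw [← hcirc]
  refine ⟨rfl, exists_int_circulation_eq hclosed hγ hγloop hoff, ?_⟩
  rintro ⟨η, hη, hbottom, htop, hsides, havoid⟩
  obtain ⟨c, hc, hconst⟩ := htop 0 (left_mem_Icc.2 zero_le_one)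
  exact circulation_eq_zero_of_nullhomotopic hclosed hγ hη.continuousOn hbottom
    (fun s hs => (hconst s hs).trans hc.symm) hsides
    fun x hx ⟨t, ht, heq⟩ => havoid x hx t ht heq.symm

end
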